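/- Let φ : S → R be a local homomorphism of Noetherian local rings, where S and R are regular local rings with maximal ideals 𝔫 and 𝔪 respectively. If dim(R) = dim(S) + dim(R/𝔫R), where dim denotes Krull dimension and 𝔫R is the ideal of R generated by the image of 𝔫, then R is flat as an S-module. -/

import Mathlib

/-- A Noetherian local ring is regular if its maximal ideal is generated by
`dim R` elements (Krull dimension). -/
def IsRegularLocal (R : Type*) [CommRing R] [IsLocalRing R] : Prop :=
  ∃ s : Finset R, Ideal.span (s : Set R) = IsLocalRing.maximalIdeal R ∧
    (s.card : WithBot (WithTop ℕ)) = ringKrullDim R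

namespace MiracleFlatness

open IsLocalRing TensorProduct

section Regular

variable {R : Type*} [CommRing R]

/-- Multiplication by `x` is injective on `R ⧸ I`. -/
def RegularMod (I : Ideal R) (x : R) : Prop :=
  ∀ a, x * a ∈ I → a ∈ I

lemma mem_sup_span_singleton {I : Ideal R} {x a : R} :
    a ∈ I ⊔ Ideal.span {x} ↔ ∃ i ∈ I, ∃ b, a = i + x * b := by
  rw [Submodule.mem_sup]
  constructor
  · rintro ⟨i, hi, z, hz, rfl⟩
    obtain ⟨b, rfl⟩ := Ideal.mem_span_singleton'.mp hz
    exact ⟨i, hi, b, by ring⟩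
  · rintro ⟨i, hi, b, rfl⟩
    exact ⟨i, hi, x * b, Ideal.mem_span_singleton'.mpr ⟨b, by ring⟩, rfl⟩

lemma span_list_cons (x : R) (l : List R) (I : Ideal R) :
    I ⊔ Ideal.span {a | a ∈ x :: l} = I ⊔ Ideal.span {x} ⊔ Ideal.span {a | a ∈ l} := by
  have : {a | a ∈ x :: l} = {x} ∪ {a | a ∈ l} := by ext; simp
  rw [this, Ideal.span_union, sup_assoc]

lemma RegularMod.swap {I : Ideal R} {x y : R} (hx : RegularMod I x)
    (hy : RegularMod (I ⊔ Ideal.span {x}) y) : RegularMod (I ⊔ Ideal.span {y}) x := by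
  intro a ha
  obtain ⟨i, hi, b, hb⟩ := mem_sup_span_singleton.mp ha
  obtain ⟨j, hj, c, rfl⟩ := mem_sup_span_singleton.mp <|
    hy b (mem_sup_span_singleton.mpr ⟨-i, I.neg_mem hi, a, by linear_combination -hb⟩)
  have h : a - y * c ∈ I := hx _ <| by
    have : x * (a - y * c) = i + y * j := by linear_combination hb
    exact this ▸ I.add_mem hi (I.mul_mem_left _ hj)
  exact mem_sup_span_singleton.mpr ⟨_, h, c, by ring⟩

lemma exists_prime_annihilator_ge [IsNoetherianRing R] {I : Ideal R} {u : R} (hu : u ∉ I) :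
    ∃ p ∈ associatedPrimes R (R ⧸ I), ∀ a, a * u ∈ I → a ∈ p := by
  obtain ⟨p, hp, hle⟩ := exists_le_isAssociatedPrime_of_isNoetherianRing R
    (Ideal.Quotient.mk I u) (by rwa [ne_eq, Ideal.Quotient.eq_zero_iff_mem])
  refine ⟨p, hp, fun a ha => hle ?_⟩
  rw [Submodule.mem_colon_singleton, Submodule.mem_bot]
  exact Ideal.Quotient.eq_zero_iff_mem.mpr ha

lemma exists_annihilator_eq_of_mem_associatedPrimes [IsNoetherianRing R] {I p : Ideal R}
    (hp : p ∈ associatedPrimes R (R ⧸ I)) : ∃ u ∉ I, ∀ a, a ∈ p ↔ a * u ∈ I := by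
  obtain ⟨hprime, x, hx⟩ := isAssociatedPrime_iff.mp hp
  obtain ⟨u, rfl⟩ := Ideal.Quotient.mk_surjective x
  have key : ∀ a, a ∈ p ↔ a * u ∈ I := fun a => by
    rw [hx, Submodule.mem_colon_singleton, Submodule.mem_bot]
    exact Ideal.Quotient.eq_zero_iff_mem (I := I) (a := a * u)
  refine ⟨u, fun hu => hprime.ne_top ?_, key⟩
  exact (Ideal.eq_top_iff_one p).mpr ((key 1).mpr (by rwa [one_mul]))

variable [IsLocalRing R]

/-- No nonzero element of `R ⧸ I` is annihilated by the maximal ideal. -/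
def SocleTrivial (I : Ideal R) : Prop :=
  ∀ u, (∀ a ∈ maximalIdeal R, a * u ∈ I) → u ∈ I

lemma RegularMod.socleTrivial {I : Ideal R} {x : R} (hx : RegularMod I x)
    (hm : x ∈ maximalIdeal R) : SocleTrivial I :=
  fun u hu => hx u (hu x hm)

lemma SocleTrivial.exchange {I : Ideal R} {x y : R} (hx : RegularMod I x)
    (hy : RegularMod I y) (hxm : x ∈ maximalIdeal R)
    (h : SocleTrivial (I ⊔ Ideal.span {x})) : SocleTrivial (I ⊔ Ideal.span {y}) := by
  intro u hu
  obtain ⟨i, hi, v, hv⟩ := mem_sup_span_singleton.mp (hu x hxm)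
  have hvx : v ∈ I ⊔ Ideal.span {x} := by
    refine h v fun a ha => ?_
    obtain ⟨j, hj, w, hw⟩ := mem_sup_span_singleton.mp (hu a ha)
    have : a * v - x * w ∈ I := hy _ <| by
      have : y * (a * v - x * w) = x * j - a * i := by linear_combination x * hw - a * hv
      exact this ▸ I.sub_mem (I.mul_mem_left _ hj) (I.mul_mem_left _ hi)
    exact mem_sup_span_singleton.mpr ⟨_, this, w, by ring⟩
  obtain ⟨j, hj, w, rfl⟩ := mem_sup_span_singleton.mp hvx
  have : u - y * w ∈ I := hx _ <| by
    have : x * (u - y * w) = i + y * j := by linear_combination hv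
    exact this ▸ I.add_mem hi (I.mul_mem_left _ hj)
  exact mem_sup_span_singleton.mpr ⟨_, this, w, by ring⟩

lemma exists_regularMod_pair [IsNoetherianRing R] {I J : Ideal R} (hI : SocleTrivial I)
    (hJ : SocleTrivial J) :
    ∃ z ∈ maximalIdeal R, RegularMod I z ∧ RegularMod J z := by
  by_contra! hcon
  have hsub : (maximalIdeal R : Set R) ⊆
      ⋃ p ∈ associatedPrimes R (R ⧸ I) ∪ associatedPrimes R (R ⧸ J), (id p : Ideal R) := by
    intro z hz
    have aux : ∀ K : Ideal R, ¬ RegularMod K z → ∃ p ∈ associatedPrimes R (R ⧸ K), z ∈ p := by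
      intro K hK
      simp only [RegularMod, not_forall] at hK
      obtain ⟨a, ha, ha'⟩ := hK
      obtain ⟨p, hp, hle⟩ := exists_prime_annihilator_ge ha'
      exact ⟨p, hp, hle z ha⟩
    simp only [Set.mem_iUnion]
    by_cases h : RegularMod I z
    · obtain ⟨p, hp, hzp⟩ := aux J (hcon z hz h)
      exact ⟨p, Or.inr hp, hzp⟩
    · obtain ⟨p, hp, hzp⟩ := aux I h
      exact ⟨p, Or.inl hp, hzp⟩
  obtain ⟨p, hp, hle⟩ := (Ideal.subset_union_prime_finite
    ((associatedPrimes.finite R (R ⧸ I)).union (associatedPrimes.finite R (R ⧸ J))) ⊤ ⊤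
    (fun p hp _ _ => hp.elim (fun h => h.isPrime) (fun h => h.isPrime))).mp hsub
  rcases hp with hp | hp
  · obtain ⟨u, hu, hup⟩ := exists_annihilator_eq_of_mem_associatedPrimes hp
    exact hu (hI u fun a ha => (hup a).mp (hle ha))
  · obtain ⟨u, hu, hup⟩ := exists_annihilator_eq_of_mem_associatedPrimes hp
    exact hu (hJ u fun a ha => (hup a).mp (hle ha))

/-- The maximal ideal contains a regular sequence of length `n` on `R ⧸ I`. -/
def DepthGE : ℕ → Ideal R → Prop
  | 0, _ => True
  | n + 1, I => ∃ x ∈ maximalIdeal R, RegularMod I x ∧ DepthGE n (I ⊔ Ideal.span {x})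

lemma DepthGE.sup_span_singleton [IsNoetherianRing R] {n : ℕ} {I : Ideal R} {y : R}
    (h : DepthGE (n + 1) I) (hym : y ∈ maximalIdeal R) (hy : RegularMod I y) :
    DepthGE n (I ⊔ Ideal.span {y}) := by
  induction n generalizing I y with
  | zero => trivial
  | succ n ih =>
    obtain ⟨x, hxm, hx, hxd⟩ := h
    have hsx : SocleTrivial (I ⊔ Ideal.span {x}) := by
      obtain ⟨w, hwm, hw, -⟩ := hxd
      exact hw.socleTrivial hwm
    obtain ⟨z, hzm, hzx, hzy⟩ := exists_regularMod_pair hsx (hsx.exchange hx hy hxm)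
    have hz : DepthGE (n + 1) (I ⊔ Ideal.span {z}) :=
      ⟨x, hxm, hx.swap hzx, by rw [sup_right_comm]; exact ih hxd hzm hzx⟩
    exact ⟨z, hzm, hzy, by rw [sup_right_comm]; exact ih hz hym (hy.swap hzy)⟩

end Regular

section Dimension

variable {R : Type*} [CommRing R]

lemma ringKrullDim_quotient_anti {I J : Ideal R} (h : I ≤ J) :
    ringKrullDim (R ⧸ J) ≤ ringKrullDim (R ⧸ I) :=
  ringKrullDim_le_of_surjective _ (Ideal.Quotient.factor_surjective h)

lemma ringKrullDim_quotient_add_one_le_of_lt {p J : Ideal R} [p.IsPrime] (h : p < J) :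
    ringKrullDim (R ⧸ J) + 1 ≤ ringKrullDim (R ⧸ p) := by
  obtain ⟨x, hxJ, hxp⟩ := SetLike.exists_of_lt h
  refine ringKrullDim_succ_le_of_surjective _ (Ideal.Quotient.factor_surjective h.le)
    (r := Ideal.Quotient.mk p x) (mem_nonZeroDivisors_of_ne_zero ?_) ?_
  · rwa [ne_eq, Ideal.Quotient.eq_zero_iff_mem]
  · rwa [Ideal.Quotient.factor_mk, Ideal.Quotient.eq_zero_iff_mem]

lemma exists_prime_le_ringKrullDim_quotient {n : ℕ} {I : Ideal R}
    (h : (n : WithBot ℕ∞) ≤ ringKrullDim (R ⧸ I)) :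
    ∃ q : Ideal R, q.IsPrime ∧ I ≤ q ∧ (n : WithBot ℕ∞) ≤ ringKrullDim (R ⧸ q) := by
  rw [ringKrullDim_quotient] at h
  obtain ⟨l, hl⟩ := Order.le_krullDim_iff.mp h
  refine ⟨l.head.1.asIdeal, l.head.1.isPrime, l.head.2, ?_⟩
  rw [ringKrullDim_quotient]
  refine Order.le_krullDim_iff.mpr ⟨⟨l.length, fun i => ⟨(l i).1, ?_⟩, fun i => l.step i⟩, hl⟩
  exact l.head_le i

variable [IsLocalRing R]

lemma ringKrullDim_quotient_maximalIdeal : ringKrullDim (R ⧸ maximalIdeal R) = 0 :=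
  ringKrullDim_eq_zero_of_isField
    ((Ideal.Quotient.maximal_ideal_iff_isField_quotient _).mp inferInstance)

variable [IsNoetherianRing R]

lemma ringKrullDim_quotient_le_sup_span_singleton (I : Ideal R) {x : R}
    (hx : x ∈ maximalIdeal R) :
    ringKrullDim (R ⧸ I) ≤ ringKrullDim (R ⧸ I ⊔ Ideal.span {x}) + 1 := by
  by_cases hI : I = ⊤
  · have : Subsingleton (R ⧸ I) := Ideal.Quotient.subsingleton_iff.mpr hI
    rw [ringKrullDim_eq_bot_of_subsingleton]
    exact bot_le
  have : Nontrivial (R ⧸ I) := Ideal.Quotient.nontrivial_iff.mpr hI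
  have : IsLocalRing (R ⧸ I) := .of_surjective' _ Ideal.Quotient.mk_surjective
  have : IsLocalHom (Ideal.Quotient.mk I) := .of_surjective _ Ideal.Quotient.mk_surjective
  have hx' : Ideal.Quotient.mk I x ∈ maximalIdeal (R ⧸ I) :=
    map_nonunit (Ideal.Quotient.mk I) x hx
  have := ringKrullDim_le_ringKrullDim_quotient_add_card {Ideal.Quotient.mk I x}
    (by rw [IsLocalRing.ringJacobson_eq_maximalIdeal]; simpa using hx')
  rw [Finset.coe_singleton, Finset.card_singleton, Nat.cast_one] at this
  refine this.trans (add_le_add_left (le_of_eq ?_) 1)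
  rw [← ringKrullDim_eq_of_ringEquiv (DoubleQuot.quotQuotEquivQuotSup I (Ideal.span {x})),
    Ideal.map_span, Set.image_singleton]

lemma ringKrullDim_quotient_le_sup_span_list (I : Ideal R) (l : List R)
    (hl : ∀ x ∈ l, x ∈ maximalIdeal R) :
    ringKrullDim (R ⧸ I) ≤ ringKrullDim (R ⧸ I ⊔ Ideal.span {a | a ∈ l}) + l.length := by
  induction l generalizing I with
  | nil => simpa using ringKrullDim_quotient_anti (by simp)
  | cons x l ih =>
    rw [span_list_cons, List.length_cons, Nat.cast_succ, ← add_assoc]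
    refine (ringKrullDim_quotient_le_sup_span_singleton I (hl x (by simp))).trans ?_
    exact add_le_add_left (ih _ fun y hy => hl y (by simp [hy])) 1

lemma DepthGE.le_ringKrullDim_of_mem_associatedPrimes {n : ℕ} {I p : Ideal R}
    (h : DepthGE n I) (hp : p ∈ associatedPrimes R (R ⧸ I)) :
    (n : WithBot ℕ∞) ≤ ringKrullDim (R ⧸ p) := by
  have := hp.isPrime
  induction n generalizing I p with
  | zero => simpa using ringKrullDim_nonneg_of_nontrivial
  | succ n ih =>
    obtain ⟨x, hxm, hx, hd⟩ := h
    obtain ⟨u, hu, hup⟩ := exists_annihilator_eq_of_mem_associatedPrimes hp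
    obtain ⟨v, hv, hvx⟩ : ∃ v, (∀ a ∈ p, a * v ∈ I) ∧ v ∉ I ⊔ Ideal.span {x} := by
      by_contra! hcon
      have hle : I.colon (p : Set R) ≤ I := by
        refine Submodule.le_of_le_smul_of_le_jacobson_bot (IsNoetherian.noetherian _)
          (maximalIdeal_le_jacobson ⊥) fun g hg => ?_
        have hg' : ∀ a ∈ p, a * g ∈ I := fun a ha => by
          simpa [mul_comm] using Submodule.mem_colon.mp hg a ha
        obtain ⟨i, hi, b, rfl⟩ := mem_sup_span_singleton.mp (hcon g hg')
        refine Submodule.add_mem_sup hi (Submodule.smul_mem_smul hxm ?_)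
        refine Submodule.mem_colon.mpr fun a ha => hx _ ?_
        have : x * (b • a) = a * (i + x * b) - a * i := by rw [smul_eq_mul]; ring
        exact this ▸ I.sub_mem (hg' a ha) (I.mul_mem_left _ hi)
      refine hu (hle (Submodule.mem_colon.mpr fun a ha => ?_))
      simpa [mul_comm] using (hup a).mp ha
    obtain ⟨q, hq, hqv⟩ := exists_prime_annihilator_ge hvx
    have hpq : p < q := by
      refine lt_of_le_of_ne (fun a ha => hqv a (Ideal.mem_sup_left (hv a ha))) ?_
      rintro rfl
      refine hu (hx u ((hup x).mp (hqv x ?_)))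
      exact mem_sup_span_singleton.mpr ⟨0, I.zero_mem, v, by ring⟩
    refine le_trans ?_ (ringKrullDim_quotient_add_one_le_of_lt hpq)
    rw [Nat.cast_succ]
    exact add_le_add_left (ih hd hq hq.isPrime) 1

lemma DepthGE.regularMod {n : ℕ} {I : Ideal R} (h : DepthGE n I) {y : R}
    (hy : ringKrullDim (R ⧸ I ⊔ Ideal.span {y}) + 1 ≤ n) : RegularMod I y := by
  intro a ha
  by_contra haI
  obtain ⟨p, hp, hpa⟩ := exists_prime_annihilator_ge haI
  have hle : I ⊔ Ideal.span {y} ≤ p := by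
    refine sup_le (fun b hb => hpa b (I.mul_mem_right _ hb)) ?_
    rw [Ideal.span_singleton_le_iff_mem]
    exact hpa y ha
  have h1 := (h.le_ringKrullDim_of_mem_associatedPrimes hp).trans (ringKrullDim_quotient_anti hle)
  have h2 := (add_le_add_left h1 1).trans hy
  norm_cast at h2
  omega

lemma isPrime_and_depthGE {n : ℕ} {I : Ideal R} (l : List R) (hl : l.length ≤ n)
    (hI : I ⊔ Ideal.span {a | a ∈ l} = maximalIdeal R)
    (hn : (n : WithBot ℕ∞) ≤ ringKrullDim (R ⧸ I)) : I.IsPrime ∧ DepthGE n I := by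
  induction n generalizing I l with
  | zero =>
    obtain rfl : l = [] := List.length_eq_zero_iff.mp (Nat.le_zero.mp hl)
    obtain rfl : I = maximalIdeal R := by simpa using hI
    exact ⟨inferInstance, trivial⟩
  | succ n ih =>
    have hlm : ∀ x ∈ l, x ∈ maximalIdeal R := fun x hx =>
      hI ▸ Ideal.mem_sup_right (Ideal.subset_span hx)
    cases l with
    | nil =>
      obtain rfl : I = maximalIdeal R := by simpa using hI
      rw [ringKrullDim_quotient_maximalIdeal] at hn
      norm_cast at hn
    | cons x l =>
      rw [span_list_cons] at hI
      have hxm := hlm x (by simp)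
      have hln : l.length ≤ n := by simpa using hl
      have hdim : (n : WithBot ℕ∞) ≤ ringKrullDim (R ⧸ I ⊔ Ideal.span {x}) := by
        have := hn.trans (ringKrullDim_quotient_le_sup_span_singleton I hxm)
        rw [Nat.cast_succ] at this
        exact ENat.WithBot.add_le_add_one_right_iff.mp this
      have hdim' : ringKrullDim (R ⧸ I ⊔ Ideal.span {x}) ≤ n := by
        have := ringKrullDim_quotient_le_sup_span_list (I ⊔ Ideal.span {x}) l
          fun y hy => hlm y (by simp [hy])
        rw [hI, ringKrullDim_quotient_maximalIdeal, zero_add] at this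
        exact this.trans (by exact_mod_cast hln)
      have hlt : ¬ ((n + 1 : ℕ) : WithBot ℕ∞) ≤ n := by norm_cast; omega
      obtain ⟨hprime, hd⟩ := ih l hln hI hdim
      obtain ⟨q, hq, hIq, hqdim⟩ := exists_prime_le_ringKrullDim_quotient hn
      have hxq : x ∉ q := fun hxq => hlt <| hqdim.trans <|
        (ringKrullDim_quotient_anti (sup_le hIq (by simpa using hxq))).trans hdim'
      have hqx : q ≤ I ⊔ Ideal.span {x} := by
        by_contra hcon
        have hlt' : I ⊔ Ideal.span {x} < q ⊔ Ideal.span {x} :=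
          lt_of_le_not_ge (sup_le_sup_right hIq _) fun h => hcon (le_sup_left.trans h)
        exact hlt <| hqdim.trans <|
          (ringKrullDim_quotient_le_sup_span_singleton q hxm).trans <|
          (ringKrullDim_quotient_add_one_le_of_lt hlt').trans hdim'
      have hqI : q ≤ I := by
        refine Submodule.le_of_le_smul_of_le_jacobson_bot (IsNoetherian.noetherian _)
          (maximalIdeal_le_jacobson ⊥) fun g hg => ?_
        obtain ⟨i, hi, b, rfl⟩ := mem_sup_span_singleton.mp (hqx hg)
        have hxb : x * b ∈ q := (q.add_mem_iff_right (hIq hi)).mp hg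
        exact Submodule.add_mem_sup hi
          (Submodule.smul_mem_smul hxm ((hq.mem_or_mem hxb).resolve_left hxq))
      obtain rfl : I = q := le_antisymm hIq hqI
      exact ⟨hq, x, hxm, fun a ha => (hq.mem_or_mem ha).resolve_left hxq, hd⟩

end Dimension

section Tensor

variable {S : Type*} [CommRing S]

/-- Vanishing of `Tor₁ (S ⧸ I, M)`. -/
def TensorInjective (M : Type*) [AddCommGroup M] [Module S M] (I : Ideal S) : Prop :=
  Function.Injective (LinearMap.lTensor M I.subtype)

/-- Multiplication by `x`, as a map from `(I : x)` to `I`. -/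
def colonMul (I : Ideal S) (x : S) : I.colon (Ideal.span {x} : Set S) →ₗ[S] I :=
  (LinearMap.mulLeft S x ∘ₗ Submodule.subtype _).codRestrict I fun c =>
    Ideal.mem_colon_span_singleton.mp c.2 |> fun h => by simpa [mul_comm] using h

/-- The map `I × S → I + (x)` sending `(i, s)` to `i + s * x`. -/
def prodToSup (I : Ideal S) (x : S) : I × S →ₗ[S] ↥(I ⊔ Ideal.span {x}) :=
  (Submodule.inclusion le_sup_left).coprod
    (LinearMap.toSpanSingleton S _ ⟨x, Ideal.mem_sup_right (Ideal.mem_span_singleton_self x)⟩)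

/-- The map `(I : x) → I × S` sending `c` to `(x * c, -c)`. -/
def colonToProd (I : Ideal S) (x : S) : I.colon (Ideal.span {x} : Set S) →ₗ[S] I × S :=
  (colonMul I x).prod (-Submodule.subtype _)

lemma prodToSup_surjective (I : Ideal S) (x : S) : Function.Surjective (prodToSup I x) := by
  rintro ⟨a, ha⟩
  obtain ⟨i, hi, b, rfl⟩ := mem_sup_span_singleton.mp ha
  exact ⟨(⟨i, hi⟩, b), Subtype.ext (by simp [prodToSup, mul_comm])⟩

lemma exact_colonToProd_prodToSup (I : Ideal S) (x : S) :
    Function.Exact (colonToProd I x) (prodToSup I x) := by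
  rintro ⟨⟨i, hi⟩, s⟩
  constructor
  · intro h
    have h' : i + s * x = 0 := by simpa [prodToSup] using congrArg Subtype.val h
    refine ⟨⟨-s, ?_⟩, ?_⟩
    · rw [Ideal.mem_colon_span_singleton]
      have : -s * x = i := by linear_combination -h'
      rwa [this]
    · refine Prod.ext (Subtype.ext ?_) (by simp [colonToProd])
      change x * -s = i
      linear_combination -h'
  · rintro ⟨c, hc⟩
    rw [← hc]
    refine Subtype.ext ?_
    simp [prodToSup, colonToProd, colonMul, mul_comm]

variable {M : Type*} [AddCommGroup M] [Module S M]

lemma exists_colon_of_lTensor_eq_zero {I : Ideal S} {x : S}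
    (h : TensorInjective M (I ⊔ Ideal.span {x})) {z : M ⊗[S] I}
    (hz : I.subtype.lTensor M z = 0) :
    ∃ w : M ⊗[S] I.colon (Ideal.span {x} : Set S),
      (Submodule.subtype _).lTensor M w = 0 ∧ (colonMul I x).lTensor M w = z := by
  have hz0 : (prodToSup I x).lTensor M ((LinearMap.inl S I S).lTensor M z) = 0 := by
    refine h ?_
    rw [map_zero, ← LinearMap.lTensor_comp_apply, ← LinearMap.lTensor_comp_apply, ← hz]
    congr 2
    ext i
    simp [prodToSup]
  obtain ⟨w, hw⟩ := (lTensor_exact M (exact_colonToProd_prodToSup I x)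
    (prodToSup_surjective I x) _).mp hz0
  refine ⟨w, ?_, ?_⟩
  · have := congrArg ((LinearMap.snd S I S).lTensor M) hw
    rw [← LinearMap.lTensor_comp_apply, ← LinearMap.lTensor_comp_apply, LinearMap.snd_comp_inl,
      LinearMap.lTensor_zero, colonToProd, LinearMap.snd_prod, LinearMap.lTensor_neg] at this
    simpa using this
  · have := congrArg ((LinearMap.fst S I S).lTensor M) hw
    rwa [← LinearMap.lTensor_comp_apply, ← LinearMap.lTensor_comp_apply, LinearMap.fst_comp_inl,
      LinearMap.lTensor_id, colonToProd, LinearMap.fst_prod] at this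

lemma isOka_tensorInjective : Ideal.IsOka (TensorInjective (S := S) M) where
  top := by
    have : (⊤ : Ideal S).subtype = (Submodule.topEquiv : (⊤ : Ideal S) ≃ₗ[S] S).toLinearMap := rfl
    rw [TensorInjective, this]
    exact (LinearEquiv.lTensor M Submodule.topEquiv).injective
  oka {I a} h₁ h₂ := by
    refine (injective_iff_map_eq_zero _).mpr fun z hz => ?_
    obtain ⟨w, hw, rfl⟩ := exists_colon_of_lTensor_eq_zero h₁ hz
    rw [(injective_iff_map_eq_zero _).mp h₂ w hw, map_zero]

lemma tensorInjective_bot : TensorInjective M (⊥ : Ideal S) :=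
  fun _ _ _ => Subsingleton.elim _ _

variable {R : Type*} [CommRing R] [Algebra S R]

lemma exists_lTensor_subtype_of_mem_map {J : Ideal S} {r : R}
    (hr : r ∈ J.map (algebraMap S R)) :
    ∃ z : R ⊗[S] J, TensorProduct.rid S R (J.subtype.lTensor R z) = r := by
  refine Submodule.span_induction ?_ ⟨0, by simp⟩ ?_ ?_ hr
  · rintro _ ⟨a, ha, rfl⟩
    exact ⟨1 ⊗ₜ ⟨a, ha⟩, by simp [Algebra.algebraMap_eq_smul_one]⟩
  · rintro _ _ _ _ ⟨z, rfl⟩ ⟨w, rfl⟩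
    exact ⟨z + w, by simp⟩
  · rintro s _ _ ⟨z, rfl⟩
    refine ⟨s • z, ?_⟩
    rw [← LinearMap.baseChange_eq_ltensor, map_smul]
    exact map_smul (AlgebraTensorModule.rid S R R) s _

lemma rid_lTensor_mem_map {J : Ideal S} (z : R ⊗[S] J) :
    TensorProduct.rid S R (J.subtype.lTensor R z) ∈ J.map (algebraMap S R) := by
  induction z with
  | zero => simp
  | add a b ha hb => simpa using Ideal.add_mem _ ha hb
  | tmul a b =>
    simpa [Algebra.smul_def] using Ideal.mul_mem_right a _ (Ideal.mem_map_of_mem _ b.2)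

lemma TensorInjective.sup_span_singleton {J : Ideal S} {x : S} (h : TensorInjective R J)
    (hx : RegularMod (J.map (algebraMap S R)) (algebraMap S R x)) :
    TensorInjective R (J ⊔ Ideal.span {x}) := by
  refine (injective_iff_map_eq_zero _).mpr fun z hz => ?_
  obtain ⟨y, rfl⟩ := LinearMap.lTensor_surjective R (prodToSup_surjective J x) z
  have split (y : R ⊗[S] (J × S)) : y =
      (LinearMap.inl S J S).lTensor R ((LinearMap.fst S J S).lTensor R y) +
      (LinearMap.inr S J S).lTensor R ((LinearMap.snd S J S).lTensor R y) := by
    rw [← LinearMap.lTensor_comp_apply, ← LinearMap.lTensor_comp_apply, ← LinearMap.add_apply,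
      ← LinearMap.lTensor_add]
    have : LinearMap.inl S J S ∘ₗ LinearMap.fst S J S +
      LinearMap.inr S J S ∘ₗ LinearMap.snd S J S = LinearMap.id := by ext <;> simp
    rw [this, LinearMap.lTensor_id_apply]
  have hinl (t : R ⊗[S] J) : (J ⊔ Ideal.span {x}).subtype.lTensor R
      ((prodToSup J x).lTensor R ((LinearMap.inl S J S).lTensor R t)) =
      J.subtype.lTensor R t := by
    rw [← LinearMap.lTensor_comp_apply, ← LinearMap.lTensor_comp_apply]
    congr 2
    ext i
    simp [prodToSup]
  have hinr (t : R ⊗[S] S) : TensorProduct.rid S R ((J ⊔ Ideal.span {x}).subtype.lTensor R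
      ((prodToSup J x).lTensor R ((LinearMap.inr S J S).lTensor R t))) =
      algebraMap S R x * TensorProduct.rid S R t := by
    induction t with
    | zero => simp
    | add a b ha hb => simp only [map_add, ha, hb, mul_add]
    | tmul a b => simp [prodToSup, Algebra.smul_def, mul_comm, mul_left_comm]
  set r := TensorProduct.rid S R ((LinearMap.snd S J S).lTensor R y) with hr
  obtain ⟨t, ht⟩ : ∃ t : R ⊗[S] J, TensorProduct.rid S R (J.subtype.lTensor R t) = r := by
    refine exists_lTensor_subtype_of_mem_map (hx r ?_)
    rw [split y, map_add, map_add, hinl] at hz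
    have := congrArg (TensorProduct.rid S R) hz
    rw [map_add, hinr, map_zero] at this
    rw [eq_neg_of_add_eq_zero_right this]
    exact neg_mem (rid_lTensor_mem_map _)
  have hle : J ≤ J.colon (Ideal.span {x} : Set S) := Ideal.le_colon
  set y' := y + (colonToProd J x).lTensor R ((Submodule.inclusion hle).lTensor R t) with hy'
  have hyy' : (prodToSup J x).lTensor R y' = (prodToSup J x).lTensor R y := by
    rw [hy', map_add, ← LinearMap.lTensor_comp_apply _ (prodToSup J x),
      (exact_colonToProd_prodToSup J x).linearMap_comp_eq_zero]
    simp
  have hsnd : (LinearMap.snd S J S).lTensor R y' = 0 := by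
    refine (TensorProduct.rid S R).injective ?_
    rw [hy', map_add, map_add, ← hr, ← ht, ← LinearMap.lTensor_comp_apply,
      ← LinearMap.lTensor_comp_apply]
    have : (LinearMap.snd S J S ∘ₗ colonToProd J x) ∘ₗ Submodule.inclusion hle =
        -J.subtype := by
      ext; simp [colonToProd]
    rw [this, LinearMap.lTensor_neg]
    simp
  have hy'inl := split y'
  rw [hsnd, map_zero, add_zero] at hy'inl
  rw [← hyy', hy'inl, hinl] at hz
  rw [← hyy', hy'inl, (injective_iff_map_eq_zero _).mp h _ hz]
  simp

end Tensor

section LocalCriterion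

variable {S R : Type*} [CommRing S] [CommRing R] [Algebra S R]
  [IsLocalRing S] [IsLocalRing R] [IsLocalHom (algebraMap S R)]
  [IsNoetherianRing R]

lemma TensorInjective.sup_span_list {J : Ideal S} (hJ : TensorInjective R J) {n : ℕ}
    (hd : DepthGE n (J.map (algebraMap S R))) (l : List S) (hl : ∀ x ∈ l, x ∈ maximalIdeal S)
    (hdim : ringKrullDim (R ⧸ (J ⊔ Ideal.span {a | a ∈ l}).map (algebraMap S R)) + l.length ≤ n) :
    TensorInjective R (J ⊔ Ideal.span {a | a ∈ l}) := by
  induction l generalizing J n with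
  | nil => simpa using hJ
  | cons x l ih =>
    rw [span_list_cons] at hdim ⊢
    have hlm : ∀ y ∈ l.map (algebraMap S R), y ∈ maximalIdeal R := fun y hy => by
      obtain ⟨z, hz, rfl⟩ := List.mem_map.mp hy
      exact map_nonunit (algebraMap S R) z (hl z (by simp [hz]))
    have hmap : (J ⊔ Ideal.span {x}).map (algebraMap S R) =
        J.map (algebraMap S R) ⊔ Ideal.span {algebraMap S R x} := by
      rw [Ideal.map_sup, Ideal.map_span, Set.image_singleton]
    have hspan : (J ⊔ Ideal.span {x} ⊔ Ideal.span {a | a ∈ l}).map (algebraMap S R) =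
        J.map (algebraMap S R) ⊔ Ideal.span {algebraMap S R x} ⊔
          Ideal.span {a | a ∈ l.map (algebraMap S R)} := by
      rw [Ideal.map_sup, hmap, Ideal.map_span]
      congr 2
      ext
      simp
    have hxdim : ringKrullDim
        (R ⧸ J.map (algebraMap S R) ⊔ Ideal.span {algebraMap S R x}) + 1 ≤ n := by
      refine (add_le_add_left (ringKrullDim_quotient_le_sup_span_list _ _ hlm) 1).trans ?_
      rwa [← hspan, List.length_map, add_assoc, ← Nat.cast_succ]
    have hreg := hd.regularMod hxdim
    have hxm := map_nonunit (algebraMap S R) x (hl x (by simp))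
    cases n with
    | zero =>
      have hbot := (ENat.WithBot.add_one_le_zero_iff _).mp hxdim
      refine ih (hJ.sup_span_singleton hreg) (n := 0) trivial (fun y hy => hl y (by simp [hy])) ?_
      have hle := ringKrullDim_quotient_anti (Ideal.map_mono (f := algebraMap S R)
        (le_sup_left : J ⊔ Ideal.span {x} ≤ J ⊔ Ideal.span {x} ⊔ Ideal.span {a | a ∈ l}))
      rw [hmap, hbot, le_bot_iff] at hle
      rw [hle, WithBot.bot_add]
      exact bot_le
    | succ n =>
      refine ih (hJ.sup_span_singleton hreg) (n := n) ?_ (fun y hy => hl y (by simp [hy])) ?_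
      · rw [hmap]
        exact hd.sup_span_singleton hxm hreg
      · rw [List.length_cons, Nat.cast_succ, Nat.cast_succ, ← add_assoc] at hdim
        exact ENat.WithBot.add_le_add_one_right_iff.mp hdim

variable [IsNoetherianRing S]

lemma TensorInjective.of_sup_span_singleton {p : Ideal S} [hp : p.IsPrime] {x : S}
    (hxp : x ∉ p) (hx : x ∈ maximalIdeal S) (h : TensorInjective R (p ⊔ Ideal.span {x})) :
    TensorInjective R p := by
  have hle : p.colon (Ideal.span {x} : Set S) ≤ p := fun c hc =>
    (hp.mem_or_mem (Ideal.mem_colon_span_singleton.mp hc)).resolve_right hxp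
  have hker : LinearMap.ker (p.subtype.baseChange R) ≤ ⊥ := by
    refine Submodule.le_of_le_smul_of_le_jacobson_bot (IsNoetherian.noetherian _)
      (maximalIdeal_le_jacobson ⊥) fun z hz => Submodule.mem_sup_right ?_
    obtain ⟨w, hw, rfl⟩ := exists_colon_of_lTensor_eq_zero h hz
    have hmul : colonMul p x = x • Submodule.inclusion hle := by ext; simp [colonMul]
    rw [hmul, LinearMap.lTensor_smul, LinearMap.smul_apply, ← algebraMap_smul R x]
    refine Submodule.smul_mem_smul (map_nonunit (algebraMap S R) x hx) ?_
    rw [LinearMap.mem_ker, LinearMap.baseChange_eq_ltensor, ← LinearMap.lTensor_comp_apply,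
      Submodule.subtype_comp_inclusion, hw]
  exact LinearMap.ker_eq_bot.mp (le_bot_iff.mp hker)

theorem flat_of_tensorInjective_maximalIdeal (h : TensorInjective R (maximalIdeal S)) :
    Module.Flat S R := by
  refine Module.Flat.iff_lTensor_injective'.mpr fun I => ?_
  change TensorInjective R I
  induction I using WellFoundedGT.induction with
  | ind I ih =>
    by_contra hI
    have hprime : I.IsPrime := (isOka_tensorInjective (M := R)).isPrime_of_maximal_not
      ⟨hI, fun J hJ hIJ => by
        by_contra hJI
        exact hJ (ih J (lt_of_le_not_ge hIJ hJI))⟩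
    have hlt : I < maximalIdeal S :=
      lt_of_le_of_ne (le_maximalIdeal hprime.ne_top) fun h' => hI (h' ▸ h)
    obtain ⟨x, hx, hxI⟩ := SetLike.exists_of_lt hlt
    exact hI (.of_sup_span_singleton hxI hx (ih _ (Submodule.lt_sup_iff_notMem.mpr hxI)))

end LocalCriterion

lemma exists_list_of_isRegularLocal {R : Type*} [CommRing R] [IsLocalRing R]
    (h : IsRegularLocal R) : ∃ l : List R, Ideal.span {a | a ∈ l} = maximalIdeal R ∧
      (l.length : WithBot ℕ∞) = ringKrullDim R := by
  obtain ⟨s, hs, hcard⟩ := h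
  refine ⟨s.toList, by simpa using hs, ?_⟩
  rw [Finset.length_toList]
  exact hcard

lemma IsRegularLocal.depthGE {R : Type*} [CommRing R] [IsLocalRing R] [IsNoetherianRing R]
    (h : IsRegularLocal R) {n : ℕ} (hn : (n : WithBot ℕ∞) = ringKrullDim R) :
    DepthGE n (⊥ : Ideal R) := by
  obtain ⟨l, hl, hlen⟩ := exists_list_of_isRegularLocal h
  refine (isPrime_and_depthGE l ?_ (by simpa using hl) ?_).2
  · rw [← hn] at hlen
    exact_mod_cast hlen.le
  · rw [hn, ringKrullDim_eq_of_ringEquiv (RingEquiv.quotientBot R)]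

end MiracleFlatness

/-- "Miracle flatness": if `φ : S → R` is a local homomorphism of Noetherian regular
local rings and `dim R = dim S + dim (R/𝔫R)`, then `R` is flat over `S`. -/
theorem stmt_9 {S R : Type*} [CommRing S] [CommRing R]
    [IsNoetherianRing S] [IsNoetherianRing R] [IsLocalRing S] [IsLocalRing R]
    (φ : S →+* R) (hφ : IsLocalHom φ)
    (hS : IsRegularLocal S) (hR : IsRegularLocal R)
    (hdim : ringKrullDim R =
      ringKrullDim S + ringKrullDim (R ⧸ Ideal.map φ (IsLocalRing.maximalIdeal S))) :
    φ.Flat := by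
  algebraize [φ]
  have : IsLocalHom (algebraMap S R) := hφ
  change Module.Flat S R
  obtain ⟨l, hl, hlen⟩ := MiracleFlatness.exists_list_of_isRegularLocal hS
  obtain ⟨n, hn⟩ : ∃ n : ℕ, (n : WithBot ℕ∞) = ringKrullDim R :=
    let ⟨t, _, ht⟩ := hR
    ⟨t.card, ht⟩
  refine MiracleFlatness.flat_of_tensorInjective_maximalIdeal ?_
  have := MiracleFlatness.TensorInjective.sup_span_list (R := R)
    MiracleFlatness.tensorInjective_bot (n := n)
    (by rw [Ideal.map_bot]; exact MiracleFlatness.IsRegularLocal.depthGE hR hn) l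
    (fun x hx => hl ▸ Ideal.subset_span hx)
    (by rw [bot_sup_eq, hl, hn, hlen, hdim, add_comm]; rfl)
  rwa [bot_sup_eq, hl] at this
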